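/- There exists a continuous function Ξ from Baire space ℕ^ℕ (sequences of positive integers) to [0,1] ⊆ ℝ such that for every sequence f of positive integers whose subsequence of first occurrences enumerates the positive integers in increasing order: (a) if no positive integer occurs infinitely often in f, then Ξ(f) is absolutely normal; and (b) if all but finitely many positive integers occur infinitely often in f, then Ξ(f) is absolutely abnormal. -/

import Mathlib

open Filter

/-- The `(i+1)`-st digit (for `i = 0, 1, 2, ...`) of the base-`b` expansion of the
fractional part of a real `R`.  For `R ∈ [0,1)` this is the unique expansion of `R`
whose digits are not eventually all equal to `b - 1`; for general `R`, normality is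
defined via the fractional part. -/
noncomputable def rdigit (b : ℕ) (R : ℝ) (i : ℕ) : ℕ :=
  (⌊Int.fract R * (b : ℝ) ^ (i + 1)⌋).toNat % b

/-- The block consisting of the first `n` digits of the base-`b` expansion of `R`. -/
noncomputable def rdigits (b : ℕ) (R : ℝ) (n : ℕ) : List ℕ := (List.range n).map (rdigit b R)

/-- `R` is simply normal to base `b`: every digit `d < b` occurs with limiting
frequency `1/b` in the base-`b` expansion of `R`. -/
def SimplyNormal (b : ℕ) (R : ℝ) : Prop :=
  ∀ d < b, Tendsto (fun n => ((rdigits b R n).count d : ℝ) / n) atTop (nhds (1 / (b : ℝ)))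

/-- `R` is normal to base `b`: it is simply normal to base `b ^ ℓ` for every `ℓ ≥ 1`. -/
def NormalBase (b : ℕ) (R : ℝ) : Prop := ∀ ℓ : ℕ, 1 ≤ ℓ → SimplyNormal (b ^ ℓ) R

/-- `R` is absolutely normal: normal to every base `b ≥ 2`. -/
def AbsolutelyNormal (R : ℝ) : Prop := ∀ b : ℕ, 2 ≤ b → NormalBase b R

/-- `R` is absolutely abnormal: normal to no base `b ≥ 2`. -/
def AbsolutelyAbnormal (R : ℝ) : Prop := ∀ b : ℕ, 2 ≤ b → ¬ NormalBase b R

open MeasureTheory ProbabilityTheory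

namespace SR

noncomputable def ind (c d : ℕ) (R : ℝ) (j : ℕ) : ℝ := if rdigit c R j = d then 1 else 0

noncomputable def N (c d : ℕ) (R : ℝ) (n : ℕ) : ℝ := ∑ j ∈ Finset.range n, ind c d R j

lemma ind_nonneg (c d : ℕ) (R : ℝ) (j : ℕ) : 0 ≤ ind c d R j := by
  unfold ind; split_ifs <;> norm_num

lemma ind_le_one (c d : ℕ) (R : ℝ) (j : ℕ) : ind c d R j ≤ 1 := by
  unfold ind; split_ifs <;> norm_num

lemma count_eq (c d : ℕ) (R : ℝ) (n : ℕ) : ((rdigits c R n).count d : ℝ) = N c d R n := by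
  induction n with
  | zero => simp [rdigits, N]
  | succ n ih =>
    have h1 : rdigits c R (n+1) = rdigits c R n ++ [rdigit c R n] := by
      simp [rdigits, List.range_succ]
    rw [h1, List.count_append, N, Finset.sum_range_succ, Nat.cast_add, ih, N]
    congr 1
    by_cases h : rdigit c R n = d <;> simp [ind, h]

lemma simplyNormal_iff (c : ℕ) (R : ℝ) : SimplyNormal c R ↔
    ∀ d < c, Tendsto (fun n : ℕ => N c d R n / n) atTop (nhds (1 / (c : ℝ))) := by
  unfold SimplyNormal
  simp only [count_eq]

lemma rdigit_cast {c : ℕ} (hc : 0 < c) (R : ℝ) (j : ℕ) :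
    (rdigit c R j : ℤ) = ⌊R * (c : ℝ) ^ (j + 1)⌋ % c := by
  unfold rdigit
  have h0 : 0 ≤ ⌊Int.fract R * (c : ℝ) ^ (j + 1)⌋ := by
    apply Int.floor_nonneg.2
    have := Int.fract_nonneg R
    positivity
  rw [Int.natCast_mod, Int.toNat_of_nonneg h0]
  have h1 : R * (c : ℝ) ^ (j + 1) = Int.fract R * (c : ℝ) ^ (j + 1)
      + ((⌊R⌋ * (c : ℤ) ^ j * c : ℤ) : ℝ) := by
    have := Int.fract_add_floor R
    push_cast
    nth_rewrite 1 [← this]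
    ring
  rw [h1, Int.floor_add_intCast, Int.add_mul_emod_self_right]

lemma rdigit_eq_iff {c : ℕ} (hc : 0 < c) (R : ℝ) (j d : ℕ) :
    rdigit c R j = d ↔ ⌊R * (c : ℝ) ^ (j + 1)⌋ % (c : ℤ) = d := by
  rw [← rdigit_cast hc]; norm_cast

lemma rdigit_shift {c : ℕ} (hc : 0 < c) (R : ℝ) (s j : ℕ) :
    rdigit c ((c : ℝ) ^ s * R) j = rdigit c R (s + j) := by
  have : ((rdigit c ((c : ℝ) ^ s * R) j : ℕ) : ℤ) = rdigit c R (s + j) := by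
    rw [rdigit_cast hc, rdigit_cast hc]
    congr 2; ring
  exact_mod_cast this

lemma rdigit_periodic (c : ℕ) (R : ℝ) (j : ℕ) :
    rdigit c (R + 1) j = rdigit c R j := by
  unfold rdigit
  rw [Int.fract_add_one]

lemma N_mono_diff (c d : ℕ) (R : ℝ) {n n' : ℕ} (h : n ≤ n') :
    0 ≤ N c d R n' - N c d R n ∧ N c d R n' - N c d R n ≤ n' - n := by
  obtain ⟨k, rfl⟩ := Nat.exists_eq_add_of_le h
  have : N c d R (n + k) - N c d R n = ∑ j ∈ Finset.range k, ind c d R (n + j) := by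
    unfold N; rw [Finset.sum_range_add]; ring
  rw [this]
  constructor
  · exact Finset.sum_nonneg fun _ _ => ind_nonneg _ _ _ _
  · calc _ ≤ ∑ j ∈ Finset.range k, (1 : ℝ) := Finset.sum_le_sum fun _ _ => ind_le_one _ _ _ _
      _ = _ := by simp

lemma N_shift {c : ℕ} (hc : 0 < c) (d : ℕ) (R : ℝ) (s n : ℕ) :
    N c d ((c : ℝ) ^ s * R) n = N c d R (s + n) - N c d R s := by
  unfold N
  rw [Finset.sum_range_add, add_sub_cancel_left]
  refine Finset.sum_congr rfl fun j _ => ?_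
  unfold ind
  rw [rdigit_shift hc]

lemma rdigit_congr {c : ℕ} (hc : 0 < c) {R y : ℝ} {n : ℕ}
    (h : ⌊R * (c : ℝ) ^ n⌋ = ⌊y * (c : ℝ) ^ n⌋) {j : ℕ} (hj : j < n) :
    rdigit c R j = rdigit c y j := by
  obtain ⟨k, rfl⟩ := Nat.exists_eq_add_of_le (Nat.succ_le_of_lt hj)
  have key : ∀ x : ℝ, ⌊x * (c : ℝ) ^ (j+1)⌋ = ⌊x * (c : ℝ) ^ (j + 1 + k)⌋ / ((c ^ k : ℕ) : ℤ) := by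
    intro x
    rw [← Int.floor_div_natCast]
    congr 1
    have : (c : ℝ) ≠ 0 := by positivity
    push_cast
    rw [pow_add]; field_simp; ring
  rw [rdigit_eq_iff hc, rdigit_cast hc, key R, key y]
  simp only [Nat.succ_eq_add_one] at h
  rw [h]

lemma N_congr {c : ℕ} (hc : 0 < c) (d : ℕ) {R y : ℝ} {n : ℕ}
    (h : ⌊R * (c : ℝ) ^ n⌋ = ⌊y * (c : ℝ) ^ n⌋) {j : ℕ} (hj : j ≤ n) :
    N c d R j = N c d y j := by
  refine Finset.sum_congr rfl fun i hi => ?_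
  unfold ind
  rw [rdigit_congr hc h (lt_of_lt_of_le (Finset.mem_range.1 hi) hj)]

/-! measure part -/

lemma measurable_rdigit (c j : ℕ) : Measurable (fun R : ℝ => rdigit c R j) := by
  unfold rdigit
  have h : Measurable (fun z : ℤ => z.toNat % c) := measurable_from_top
  exact h.comp (Int.measurable_floor.comp ((measurable_fract).mul_const _))

lemma measurable_ind (c d j : ℕ) : Measurable (fun R : ℝ => ind c d R j) := by
  unfold ind
  exact Measurable.ite ((measurable_rdigit c j) (measurableSet_singleton d))
    measurable_const measurable_const

lemma measurable_N (c d n : ℕ) : Measurable (fun R : ℝ => N c d R n) := by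
  unfold N
  exact Finset.measurable_sum _ fun j _ => measurable_ind c d j

lemma vol_unit {G : Set ℝ} (hG : MeasurableSet G) (hp : ∀ x, x + 1 ∈ G ↔ x ∈ G) (t : ℝ) :
    volume (G ∩ Set.Ico t (t + 1)) = volume (G ∩ Set.Ico 0 1) := by
  have hz : ∀ (n : ℤ) (x : ℝ), (n : ℝ) + x ∈ G ↔ x ∈ G := by
    intro n
    induction n with
    | zero => intro x; simp
    | succ n ih =>
      intro x
      rw [← ih x, ← hp ((n : ℤ) + x)]
      push_cast
      rw [show (n : ℝ) + 1 + x = n + x + 1 by ring]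
    | pred n ih =>
      intro x
      rw [← ih x, ← hp (((-(n : ℤ) - 1 : ℤ) : ℝ) + x)]
      push_cast
      rw [show -(n : ℝ) - 1 + x + 1 = -n + x by ring]
  have h1 := (isAddFundamentalDomain_Ioc (one_pos : (0:ℝ) < 1) t)
  have h2 := (isAddFundamentalDomain_Ioc (one_pos : (0:ℝ) < 1) 0)
  have := h1.measure_set_eq (μ := volume) h2 hG (by
    rintro ⟨g, hg⟩
    obtain ⟨n, rfl⟩ := AddSubgroup.mem_zmultiples_iff.1 hg
    ext x
    have := hz n x
    simpa [AddSubgroup.vadd_def] using this)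
  rw [zero_add] at this
  rw [measure_congr ((ae_eq_refl G).inter (Ico_ae_eq_Ioc (a := t) (b := t+1))), this,
    measure_congr ((ae_eq_refl G).inter (Ico_ae_eq_Ioc (a := (0:ℝ)) (b := 1)))]

lemma vol_nat {G : Set ℝ} (hG : MeasurableSet G) (hp : ∀ x, x + 1 ∈ G ↔ x ∈ G) (n : ℕ) (t : ℝ) :
    volume (G ∩ Set.Ico t (t + n)) = n * volume (G ∩ Set.Ico 0 1) := by
  induction n with
  | zero => simp
  | succ n ih =>
    have : G ∩ Set.Ico t (t + (n + 1 : ℕ)) =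
        (G ∩ Set.Ico t (t + n)) ∪ (G ∩ Set.Ico (t + n) (t + n + 1)) := by
      rw [← Set.inter_union_distrib_left, Set.Ico_union_Ico_eq_Ico (by simp) (by simp)]
      push_cast; rw [add_assoc]
    rw [this, measure_union _ (hG.inter measurableSet_Ico), ih, vol_unit hG hp]
    · push_cast; ring
    · refine Set.disjoint_left.2 fun x hx hx' => ?_
      exact absurd hx.2.2 (not_lt.2 hx'.2.1)

lemma vol_scale {G : Set ℝ} (hG : MeasurableSet G) (hp : ∀ x, x + 1 ∈ G ↔ x ∈ G) (n : ℕ) (a : ℝ)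
    {r : ℝ} (hr : 0 < r) :
    volume ({y | r * y ∈ G} ∩ Set.Ico a (a + n / r)) =
      ENNReal.ofReal (r⁻¹) * (n * volume (G ∩ Set.Ico 0 1)) := by
  have : {y | r * y ∈ G} ∩ Set.Ico a (a + n / r) =
      (r * ·) ⁻¹' (G ∩ Set.Ico (r * a) (r * a + n)) := by
    ext y
    simp only [Set.mem_inter_iff, Set.mem_ofPred_eq, Set.mem_Ico, Set.mem_preimage]
    have e1 : a ≤ y ↔ r * a ≤ r * y := (mul_le_mul_iff_right₀ hr).symm
    have e2 : y < a + n / r ↔ r * y < r * a + n := by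
      rw [← mul_lt_mul_iff_right₀ hr]
      have : r * (a + n / r) = r * a + n := by field_simp
      rw [this]
    rw [e1, e2]
  rw [this, Real.volume_preimage_mul_left hr.ne', vol_nat hG hp, abs_of_pos (inv_pos.2 hr)]

end SR

namespace SR

noncomputable def P : Measure ℝ := volume.restrict (Set.Ico 0 1)

instance : IsProbabilityMeasure P := ⟨by simp [P]⟩

def A (c d j : ℕ) : Set ℝ := {ω | rdigit c ω j = d}

lemma measurableSet_A (c d j : ℕ) : MeasurableSet (A c d j) :=
  (measurable_rdigit c j) (measurableSet_singleton d)

lemma A_periodic (c d j : ℕ) (x : ℝ) : x + 1 ∈ A c d j ↔ x ∈ A c d j := by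
  show rdigit c (x+1) j = d ↔ rdigit c x j = d
  rw [rdigit_periodic]

lemma P_apply {G : Set ℝ} (hG : MeasurableSet G) : P G = volume (G ∩ Set.Ico 0 1) := by
  unfold P; rw [Measure.restrict_apply hG]

lemma measurableSet_pull {G : Set ℝ} (hG : MeasurableSet G) (r : ℝ) :
    MeasurableSet {y : ℝ | r * y ∈ G} := (measurable_const_mul r) hG

lemma P_pull {G : Set ℝ} (hG : MeasurableSet G) (hp : ∀ x, x + 1 ∈ G ↔ x ∈ G) {c : ℕ}
    (hc : 0 < c) (s : ℕ) : P {y | (c : ℝ) ^ s * y ∈ G} = P G := by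
  rw [P_apply (measurableSet_pull hG _), P_apply hG]
  have hr : (0:ℝ) < (c:ℝ)^s := by positivity
  have := vol_scale hG hp (c ^ s) 0 hr
  rw [show (0:ℝ) + ((c ^ s : ℕ) : ℝ) / (c:ℝ)^s = 1 by push_cast; field_simp; simp] at this
  rw [this, ← mul_assoc]
  have h2 : ((c ^ s : ℕ) : ENNReal) = ENNReal.ofReal ((c:ℝ)^s) := by
    rw [← Nat.cast_pow, ENNReal.ofReal_natCast]
  rw [h2, ← ENNReal.ofReal_mul (by positivity), inv_mul_cancel₀ hr.ne']
  simp

lemma A0_inter {c d : ℕ} (hd : d < c) :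
    A c d 0 ∩ Set.Ico 0 1 = Set.Ico ((d : ℝ) / c) (d / c + (1 : ℕ) / c) := by
  have hc : 0 < c := by omega
  have hc' : (0:ℝ) < c := by positivity
  ext y
  have e1 : (d : ℝ) / c ≤ y ↔ (d : ℝ) ≤ y * c := div_le_iff₀ hc'
  have e2 : y < (d : ℝ) / c + (1 : ℕ) / c ↔ y * c < d + 1 := by
    rw [← add_div, lt_div_iff₀ hc']; simp
  simp only [Set.mem_inter_iff, Set.mem_Ico, A, Set.mem_ofPred_eq, rdigit_eq_iff hc, e1, e2]
  simp only [zero_add, pow_one]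
  have hd' : (d : ℝ) + 1 ≤ c := by exact_mod_cast hd
  constructor
  · rintro ⟨h, h0, h1⟩
    have f0 : 0 ≤ ⌊y * (c : ℝ)⌋ := Int.floor_nonneg.2 (by positivity)
    have f1 : ⌊y * (c : ℝ)⌋ < c := Int.floor_lt.2 (by push_cast; nlinarith)
    rw [Int.emod_eq_of_lt f0 f1] at h
    have := Int.floor_eq_iff.1 h
    exact_mod_cast this
  · rintro ⟨h0, h1⟩
    have : ⌊y * (c : ℝ)⌋ = (d : ℤ) := Int.floor_eq_iff.2 (by push_cast; exact ⟨h0, h1⟩)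
    rw [this]
    refine ⟨Int.emod_eq_of_lt (by positivity) (by exact_mod_cast hd), ?_, ?_⟩
    · by_contra hy
      push Not at hy
      have : y * c < 0 := mul_neg_of_neg_of_pos hy hc'
      have : (0:ℝ) ≤ d := by positivity
      linarith
    · by_contra hy
      push Not at hy
      nlinarith

lemma P_A0_inter {G : Set ℝ} (hG : MeasurableSet G) (hp : ∀ x, x + 1 ∈ G ↔ x ∈ G) {c d : ℕ}
    (hd : d < c) : P (A c d 0 ∩ {y | (c : ℝ) * y ∈ G}) = ENNReal.ofReal ((c : ℝ)⁻¹) * P G := by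
  have hc : (0:ℝ) < c := by exact_mod_cast (by omega : 0 < c)
  rw [P_apply ((measurableSet_A c d 0).inter (measurableSet_pull hG _)), Set.inter_right_comm,
    A0_inter hd, Set.inter_comm, vol_scale hG hp 1 _ hc, P_apply hG]
  simp

lemma A_pull {c : ℕ} (hc : 0 < c) (d s j : ℕ) :
    A c d (s + j) = {y | (c : ℝ) ^ s * y ∈ A c d j} := by
  ext y
  show rdigit c y (s + j) = d ↔ rdigit c ((c : ℝ)^s * y) j = d
  rw [rdigit_shift hc]

lemma P_A0 {c d : ℕ} (hd : d < c) : P (A c d 0) = ENNReal.ofReal ((c : ℝ)⁻¹) := by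
  have := P_A0_inter MeasurableSet.univ (by simp) hd
  simpa using this

lemma P_A {c d : ℕ} (hd : d < c) (j : ℕ) : P (A c d j) = ENNReal.ofReal ((c : ℝ)⁻¹) := by
  have hc : 0 < c := by omega
  have := A_pull hc d j 0
  rw [add_zero] at this
  rw [this, P_pull (measurableSet_A c d 0) (A_periodic c d 0) hc, P_A0 hd]

lemma P_A_inter_lt {c d : ℕ} (hd : d < c) {i j : ℕ} (hij : i < j) :
    P (A c d i ∩ A c d j) = P (A c d i) * P (A c d j) := by
  have hc : 0 < c := by omega
  obtain ⟨k, rfl⟩ := Nat.exists_eq_add_of_le (Nat.succ_le_of_lt hij)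
  have h1 : A c d i ∩ A c d (i.succ + k) =
      {y | (c : ℝ) ^ i * y ∈ A c d 0 ∩ {z | (c : ℝ) * z ∈ A c d k}} := by
    have e1 := A_pull hc d i 0
    have e2 := A_pull hc d i (1 + k)
    have e3 := A_pull hc d 1 k
    rw [add_zero] at e1
    rw [show i.succ + k = i + (1 + k) by omega, e1, e2, e3]
    simp only [pow_one]
    rfl
  rw [h1, P_pull _ _ hc, P_A0_inter (measurableSet_A c d k) (A_periodic c d k) hd, P_A hd,
    P_A hd, P_A hd]
  · exact (measurableSet_A c d 0).inter (measurableSet_pull (measurableSet_A c d k) _)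
  · intro x
    have hn : ∀ (n : ℕ) (x : ℝ), x + n ∈ A c d k ↔ x ∈ A c d k := by
      intro n
      induction n with
      | zero => simp
      | succ n ih =>
        intro x
        rw [← ih x, ← A_periodic c d k (x + n)]
        push_cast; rw [add_assoc]
    have := hn c (c * x)
    simp only [Set.mem_inter_iff, A_periodic, Set.mem_ofPred_eq, mul_add, mul_one, this]

lemma P_A_inter {c d : ℕ} (hd : d < c) {i j : ℕ} (hij : i ≠ j) :
    P (A c d i ∩ A c d j) = P (A c d i) * P (A c d j) := by
  rcases lt_or_gt_of_ne hij with h | h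
  · exact P_A_inter_lt hd h
  · rw [Set.inter_comm, P_A_inter_lt hd h, mul_comm]

lemma ind_eq_indicator (c d j : ℕ) :
    (fun R => ind c d R j) = (A c d j).indicator (fun _ => (1:ℝ)) := by
  classical
  ext R
  by_cases h : rdigit c R j = d <;> simp [ind, Set.indicator, A, h]

lemma slln {c d : ℕ} (hd : d < c) :
    ∀ᵐ ω ∂P, Tendsto (fun n : ℕ => N c d ω n / n) atTop (nhds (1 / (c : ℝ))) := by
  have hInt : ∀ j, ∫ ω, ind c d ω j ∂P = 1 / (c:ℝ) := by
    intro j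
    rw [ind_eq_indicator, integral_indicator_const _ (measurableSet_A c d j), Measure.real, P_A hd,
      ENNReal.toReal_ofReal (by positivity)]
    simp
  have := strong_law_ae_real (μ := P) (fun j ω => ind c d ω j) ?_ ?_ ?_
  · simp only [hInt] at this
    exact this
  · rw [ind_eq_indicator]
    exact (integrable_const _).indicator (measurableSet_A c d 0)
  · intro i j hij
    show IndepFun (fun ω => ind c d ω i) (fun ω => ind c d ω j) P
    have hI : IndepSet (A c d i) (A c d j) P :=
      (indepSet_iff_measure_inter_eq_mul (measurableSet_A c d i) (measurableSet_A c d j) P).2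
        (P_A_inter hd hij)
    rw [ind_eq_indicator, ind_eq_indicator]
    have h1 : ((A c d i).indicator (fun _ => (1:ℝ))) ⟂ᵢ[P] ((A c d j).indicator (fun _ => (1:ℝ))) := by
      refine Indep.indicator_indepFun (m := MeasurableSpace.generateFrom {A c d i}) 1
        (MeasurableSpace.measurableSet_generateFrom rfl) ?_
      refine indep_of_indep_of_le_right hI ?_
      rw [← measurable_iff_comap_le]
      exact measurable_const.indicator (MeasurableSpace.measurableSet_generateFrom rfl)
    exact h1
  · intro i
    refine ⟨(measurable_ind c d i).aemeasurable, (measurable_ind c d 0).aemeasurable, ?_⟩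
    ext s hs
    rw [Measure.map_apply (measurable_ind c d i) hs, Measure.map_apply (measurable_ind c d 0) hs]
    have hpre : ∀ j, (fun ω => ind c d ω j) ⁻¹' s =
       {ω | (c : ℝ) ^ j * ω ∈ (fun ω => ind c d ω 0) ⁻¹' s} := by
      intro j
      ext ω
      simp only [Set.mem_preimage, Set.mem_ofPred_eq, ind, rdigit_shift (by omega : 0 < c), add_zero]
    rw [hpre i]
    refine P_pull (measurable_ind c d 0 hs) ?_ (by omega) i
    intro x
    simp only [Set.mem_preimage, ind, rdigit_periodic]

end SR

namespace SR

def Bad (c d : ℕ) (δ : ℝ) (M : ℕ) : Set ℝ := {ω | ∃ n : ℕ, δ * n + M < |N c d ω n - n / c|}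

lemma measurableSet_Bad (c d : ℕ) (δ : ℝ) (M : ℕ) : MeasurableSet (Bad c d δ M) := by
  have : Bad c d δ M = ⋃ n : ℕ, {ω | δ * n + M < |N c d ω n - n / c|} := by
    ext; simp [Bad]
  rw [this]
  refine MeasurableSet.iUnion fun n => measurableSet_lt measurable_const ?_
  exact ((measurable_N c d n).sub_const _).abs

lemma N_periodic (c d : ℕ) (x : ℝ) (n : ℕ) : N c d (x + 1) n = N c d x n := by
  simp only [N, ind, rdigit_periodic]

lemma Bad_periodic (c d : ℕ) (δ : ℝ) (M : ℕ) (x : ℝ) :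
    x + 1 ∈ Bad c d δ M ↔ x ∈ Bad c d δ M := by
  simp only [Bad, Set.mem_ofPred_eq, N_periodic]

lemma N_diff_le {c : ℕ} (hc : 0 < c) (d : ℕ) (R : ℝ) {n n' : ℕ} (h : n ≤ n') :
    |(N c d R n' - n' / c) - (N c d R n - n / c)| ≤ n' - n := by
  obtain ⟨h1, h2⟩ := N_mono_diff c d R h
  have hc1 : (1:ℝ) ≤ c := by exact_mod_cast hc
  have h3 : (n : ℝ) ≤ n' := by exact_mod_cast h
  have h4 : ((n' : ℝ) - n) / c ≤ n' - n := div_le_self (by linarith) hc1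
  have h5 : 0 ≤ ((n' : ℝ) - n) / c := div_nonneg (by linarith) (by linarith)
  rw [sub_div] at h4 h5
  rw [abs_le]; constructor <;> linarith

lemma eventually_err {c d : ℕ} {ω : ℝ} {δ : ℝ} (hδ : 0 < δ)
    (h : Tendsto (fun n : ℕ => N c d ω n / n) atTop (nhds (1 / (c : ℝ)))) :
    ∀ᶠ n : ℕ in atTop, |N c d ω n - n / c| ≤ δ * n := by
  have := (Metric.tendsto_nhds.1 h) δ hδ
  filter_upwards [this, eventually_ge_atTop 1] with n hn h1
  rw [Real.dist_eq] at hn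
  have hn0 : (0:ℝ) < n := by exact_mod_cast h1
  have : N c d ω n - n / c = (N c d ω n / n - 1 / c) * n := by field_simp
  rw [this, abs_mul, abs_of_pos hn0]
  gcongr

lemma bad_tendsto {c d : ℕ} (hd : d < c) {δ : ℝ} (hδ : 0 < δ) :
    Tendsto (fun M : ℕ => P (Bad c d δ M)) atTop (nhds 0) := by
  have h := tendsto_measure_iInter_atTop (μ := P) (s := fun M : ℕ => Bad c d δ M)
    (fun M => (measurableSet_Bad c d δ M).nullMeasurableSet) ?_ ⟨0, measure_ne_top _ _⟩
  · have h0 : P (⋂ n : ℕ, Bad c d δ n) = 0 := by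
      refine measure_mono_null ?_ (ae_iff.1 (slln hd))
      intro ω hω
      show ¬ _
      intro hT
      obtain ⟨n0, hn0⟩ := eventually_atTop.1 (eventually_err hδ hT)
      obtain ⟨n, hn⟩ := Set.mem_iInter.1 hω n0
      have hδn : 0 ≤ δ * n := by positivity
      by_cases hle : n0 ≤ n
      · have := hn0 n hle
        have : (0:ℝ) ≤ n0 := by positivity
        linarith
      · have h1 := N_diff_le (by omega : 0 < c) d ω (Nat.zero_le n)
        have h2 : (n:ℝ) ≤ n0 := by exact_mod_cast (by omega : n ≤ n0)
        simp [N] at h1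
        simp only [N] at hn
        linarith
    rw [h0] at h
    exact h
  · intro M M' hM ω ⟨n, hn⟩
    refine ⟨n, lt_of_le_of_lt ?_ hn⟩
    have : (M : ℝ) ≤ M' := by exact_mod_cast hM
    linarith

lemma good_points (k : ℕ) {δ : ℝ} (hδ : 0 < δ) : ∃ M : ℕ, ∀ p Q : ℕ, 1 ≤ Q → p + 1 ≤ Q →
    ∃ y ∈ Set.Ioo ((p : ℝ) / Q) ((p + 1) / Q), (∀ c ≥ 2, SimplyNormal c y) ∧
      ∀ c, 2 ≤ c → c ≤ k → ∀ d < c, ∀ n : ℕ,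
        |N c d y (Nat.clog c Q + n) - N c d y (Nat.clog c Q) - n / c| ≤ δ * n + M := by
  have hsum : Tendsto (fun M : ℕ => ∑ c ∈ Finset.Icc 2 k, ∑ d ∈ Finset.range c,
      (c : ENNReal) * P (Bad c d δ M)) atTop (nhds (∑ c ∈ Finset.Icc 2 k, ∑ d ∈ Finset.range c,
      (c : ENNReal) * 0)) := by
    refine tendsto_finsetSum _ fun c hc => tendsto_finsetSum _ fun d hd => ?_
    exact ENNReal.Tendsto.const_mul (bad_tendsto (Finset.mem_range.1 hd) hδ)
      (Or.inr (ENNReal.natCast_ne_top c))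
  simp only [mul_zero, Finset.sum_const_zero] at hsum
  obtain ⟨M, hM⟩ := (hsum.eventually (gt_mem_nhds one_pos)).exists
  refine ⟨M, fun p Q hQ hp => ?_⟩
  have hQ0 : (0:ℝ) < Q := by exact_mod_cast hQ
  set B : Set ℝ := ⋃ c ∈ Finset.Icc 2 k, ⋃ d ∈ Finset.range c,
    ({y | (c : ℝ) ^ (Nat.clog c Q) * y ∈ Bad c d δ M} ∩
      Set.Ico ((p : ℝ) / Q) (p / Q + c / (c : ℝ) ^ (Nat.clog c Q))) with hB
  have hBvol : volume B < ENNReal.ofReal (1 / Q) := by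
    calc volume B ≤ ∑ c ∈ Finset.Icc 2 k, ∑ d ∈ Finset.range c,
          volume ({y | (c : ℝ) ^ (Nat.clog c Q) * y ∈ Bad c d δ M} ∩
            Set.Ico ((p : ℝ) / Q) (p / Q + c / (c : ℝ) ^ (Nat.clog c Q))) := by
          refine (measure_biUnion_finset_le _ _).trans (Finset.sum_le_sum fun c _ => ?_)
          exact measure_biUnion_finset_le _ _
      _ ≤ ∑ c ∈ Finset.Icc 2 k, ∑ d ∈ Finset.range c,
          ENNReal.ofReal (1 / Q) * ((c : ENNReal) * P (Bad c d δ M)) := by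
          refine Finset.sum_le_sum fun c hc => Finset.sum_le_sum fun d _ => ?_
          have hc2 : 2 ≤ c := (Finset.mem_Icc.1 hc).1
          have hcp : (0:ℝ) < (c : ℝ) ^ (Nat.clog c Q) := by positivity
          rw [vol_scale (measurableSet_Bad c d δ M) (Bad_periodic c d δ M) c _ hcp,
            P_apply (measurableSet_Bad c d δ M)]
          gcongr
          rw [← one_div]
          apply one_div_le_one_div_of_le hQ0
          exact_mod_cast Nat.le_pow_clog (by omega) Q
      _ = ENNReal.ofReal (1 / Q) * ∑ c ∈ Finset.Icc 2 k, ∑ d ∈ Finset.range c,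
          ((c : ENNReal) * P (Bad c d δ M)) := by
          simp only [Finset.mul_sum]
      _ < ENNReal.ofReal (1 / Q) * 1 := by
          refine ENNReal.mul_lt_mul_right ?_ ENNReal.ofReal_ne_top hM
          simpa using (by omega : Q ≠ 0)
      _ = _ := by simp
  have hZ : volume ({y | ¬ ∀ c ≥ 2, SimplyNormal c y} ∩ Set.Ico 0 1) = 0 := by
    have : ∀ᵐ y ∂P, ∀ c ≥ 2, SimplyNormal c y := by
      simp only [simplyNormal_iff]
      rw [ae_all_iff]; intro c
      rw [ae_all_iff]; intro _
      rw [ae_all_iff]; intro d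
      rw [ae_all_iff]; intro hd
      exact slln hd
    rw [ae_iff, P, Measure.restrict_apply' measurableSet_Ico] at this
    exact this
  have hlt : volume (B ∪ ({y | ¬ ∀ c ≥ 2, SimplyNormal c y} ∩ Set.Ico 0 1)) <
      volume (Set.Ioo ((p : ℝ) / Q) ((p + 1) / Q)) := by
    refine (measure_union_le _ _).trans_lt ?_
    rw [hZ, add_zero, Real.volume_Ioo]
    convert! hBvol using 2
    ring
  have hns : ¬ Set.Ioo ((p : ℝ) / Q) ((p + 1) / Q) ⊆
      B ∪ ({y | ¬ ∀ c ≥ 2, SimplyNormal c y} ∩ Set.Ico 0 1) :=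
    fun h => absurd (measure_mono h) (not_le.2 hlt)
  obtain ⟨y, hy, hyn⟩ := Set.not_subset.1 hns
  have hyn1 : y ∉ B := fun h => hyn (Or.inl h)
  refine ⟨y, hy, ?_, ?_⟩
  · by_contra hcon
    refine hyn (Or.inr ⟨hcon, ?_, ?_⟩)
    · exact le_trans (by positivity) hy.1.le
    · refine hy.2.trans_le ?_
      rw [div_le_one hQ0]; exact_mod_cast hp
  · intro c hc2 hck d hd n
    by_contra hcon
    push Not at hcon
    apply hyn1
    simp only [hB, Set.mem_iUnion]
    refine ⟨c, Finset.mem_Icc.2 ⟨hc2, hck⟩, d, Finset.mem_range.2 hd, ?_, hy.1.le, ?_⟩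
    · refine ⟨n, ?_⟩
      rw [N_shift (by omega)]
      exact hcon
    · refine hy.2.trans_le ?_
      rw [add_div]
      refine add_le_add le_rfl ?_
      rw [div_le_div_iff₀ hQ0 (by positivity), one_mul]
      rcases Nat.lt_or_ge 1 Q with h1 | h1
      · have h2 := Nat.pow_pred_clog_lt_self (b := c) (by omega) h1
        have h3 := Nat.clog_pos (b := c) (by omega) h1
        have h4 : c ^ Nat.clog c Q ≤ c * Q := by
          obtain ⟨t, ht⟩ := Nat.exists_eq_succ_of_ne_zero h3.ne'
          rw [ht] at h2 ⊢
          rw [Nat.pow_succ, mul_comm]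
          exact Nat.mul_le_mul_left c h2.le
        exact_mod_cast h4
      · have : Q = 1 := by omega
        subst this
        simp
        exact_mod_cast (by omega : 1 ≤ c)

end SR

namespace SR

lemma exists_digit {c d : ℕ} {y : ℝ} {n n' : ℕ} (hn : n ≤ n') (h : 0 < N c d y n' - N c d y n) :
    ∃ a, n + a < n' ∧ rdigit c y (n + a) = d := by
  obtain ⟨k, rfl⟩ := Nat.exists_eq_add_of_le hn
  have e : N c d y (n + k) - N c d y n = ∑ j ∈ Finset.range k, ind c d y (n + j) := by
    unfold N; rw [Finset.sum_range_add]; ring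
  by_contra hcon
  push Not at hcon
  have : ∑ j ∈ Finset.range k, ind c d y (n + j) = 0 := by
    refine Finset.sum_eq_zero fun j hj => ?_
    have := hcon j (by have := Finset.mem_range.1 hj; omega)
    simp [ind, this]
  linarith

lemma floor_agree {c : ℕ} (hc : 2 ≤ c) {y R : ℝ} {n1 n2 : ℕ}
    (h0 : ∃ a, n1 + a < n2 ∧ rdigit c y (n1 + a) = 0)
    (h1 : ∃ a, n1 + a < n2 ∧ rdigit c y (n1 + a) = 1)
    (hR : |R - y| < 1 / (c : ℝ) ^ n2) :
    ⌊R * (c : ℝ) ^ n1⌋ = ⌊y * (c : ℝ) ^ n1⌋ := by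
  have hc0 : (0:ℝ) < c := by positivity
  have hc1 : (1:ℝ) ≤ c := by exact_mod_cast (by omega : 1 ≤ c)
  have hF1 := Int.floor_le (y * (c : ℝ) ^ n1)
  have hF2 := Int.lt_floor_add_one (y * (c : ℝ) ^ n1)
  set F := ⌊y * (c : ℝ) ^ n1⌋ with hF
  have key : ∀ a, n1 + a < n2 → |R * (c : ℝ) ^ (n1 + a + 1) - y * (c : ℝ) ^ (n1 + a + 1)| < 1 := by
    intro a ha
    rw [← sub_mul, abs_mul, abs_of_pos (by positivity : (0:ℝ) < (c : ℝ) ^ (n1 + a + 1))]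
    have : (c : ℝ) ^ (n1 + a + 1) ≤ (c : ℝ) ^ n2 := pow_le_pow_right₀ hc1 (by omega)
    calc _ < 1 / (c : ℝ) ^ n2 * (c : ℝ) ^ (n1 + a + 1) := by gcongr
      _ ≤ 1 / (c : ℝ) ^ n2 * (c : ℝ) ^ n2 := by gcongr
      _ = 1 := by field_simp
  have hpow : ∀ (x : ℝ) a, x * (c : ℝ) ^ (n1 + a + 1) = x * (c : ℝ) ^ n1 * (c : ℝ) ^ (a + 1) := by
    intro x a; ring
  rw [Int.floor_eq_iff]
  constructor
  · by_contra hlt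
    push Not at hlt
    obtain ⟨a, ha, hd⟩ := h1
    have hk := abs_lt.1 (key a ha)
    rw [hpow, hpow] at hk
    have hca : (0:ℝ) < (c:ℝ)^(a+1) := by positivity
    have hfl : ⌊y * (c : ℝ) ^ (n1 + a + 1)⌋ = F * (c : ℤ) ^ (a + 1) := by
      rw [Int.floor_eq_iff, hpow]
      push_cast
      constructor
      · gcongr
      · have : R * (c : ℝ) ^ n1 * (c:ℝ)^(a+1) < F * (c:ℝ)^(a+1) := by gcongr
        linarith
    have := rdigit_cast (by omega : 0 < c) y (n1 + a)
    rw [hd, hfl, pow_succ, ← mul_assoc, Int.mul_emod_left] at this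
    simp at this
  · by_contra hlt
    push Not at hlt
    obtain ⟨a, ha, hd⟩ := h0
    have hk := abs_lt.1 (key a ha)
    rw [hpow, hpow] at hk
    have hca : (0:ℝ) < (c:ℝ)^(a+1) := by positivity
    have hfl : ⌊y * (c : ℝ) ^ (n1 + a + 1)⌋ = (F + 1) * (c : ℤ) ^ (a + 1) - 1 := by
      rw [Int.floor_eq_iff, hpow]
      push_cast
      constructor
      · have : ((F : ℝ) + 1) * (c:ℝ)^(a+1) ≤ R * (c : ℝ) ^ n1 * (c:ℝ)^(a+1) := by gcongr
        linarith
      · have : y * (c : ℝ) ^ n1 * (c:ℝ)^(a+1) < ((F : ℝ) + 1) * (c:ℝ)^(a+1) := by gcongr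
        linarith
    have h3 := rdigit_cast (by omega : 0 < c) y (n1 + a)
    rw [hd, hfl] at h3
    have h4 : (c : ℤ) ∣ (F + 1) * (c : ℤ) ^ (a + 1) - 1 := Int.dvd_of_emod_eq_zero h3.symm
    have h5 : (c : ℤ) ∣ (F + 1) * (c : ℤ) ^ (a + 1) :=
      Dvd.dvd.mul_left (dvd_pow_self _ (by omega)) _
    have h6 : (c : ℤ) ∣ 1 := by
      have := dvd_sub h5 h4
      simpa using this
    have := Int.le_of_dvd one_pos h6
    omega

lemma per_base {c : ℕ} (hc : 2 ≤ c) {y : ℝ} (hy : SimplyNormal c y) {δ : ℝ} (hδ : 0 < δ)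
    (hδ1 : δ ≤ 1) {b e : ℕ} (hb : 2 ≤ b) (he : 1 ≤ e) (s B : ℕ) :
    ∀ᶠ m : ℕ in atTop, B ≤ Nat.clog c (b ^ ((e + 1) * m)) ∧ ∃ n1 : ℕ, s ≤ n1 ∧
      n1 ≤ Nat.clog c (b ^ ((e + 1) * m)) ∧
      ((Nat.clog c (b ^ ((e + 1) * m)) : ℝ) - n1 ≤ (2 / e + δ) * n1) ∧
      (∀ d < c, |N c d y n1 - n1 / c| ≤ δ * n1) ∧
      ∀ R : ℝ, |R - y| < 1 / (b : ℝ) ^ (e * m) → ⌊R * (c : ℝ) ^ n1⌋ = ⌊y * (c : ℝ) ^ n1⌋ := by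
  have hc0 : (0:ℝ) < c := by positivity
  have hc2 : (2:ℝ) ≤ c := by exact_mod_cast hc
  set δ' := δ / (16 * c) with hδ'
  have hδ'0 : 0 < δ' := by positivity
  have hδδ : δ' ≤ δ := div_le_self hδ.le (by linarith)
  have hev : ∀ᶠ n : ℕ in atTop, ∀ d ∈ Finset.range c, |N c d y n - n / c| ≤ δ' * n := by
    rw [Filter.eventually_all_finset]
    intro d hd
    exact eventually_err hδ'0 ((simplyNormal_iff c y).1 hy d (Finset.mem_range.1 hd))
  obtain ⟨n0, hn0⟩ := eventually_atTop.1 hev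
  obtain ⟨K, hK⟩ := exists_nat_ge (4 * ((e : ℝ) + 2) / δ + 2 * n0 + 2 * s + B + 8)
  filter_upwards [eventually_ge_atTop (c ^ K)] with m hm
  set n2 := Nat.log c (b ^ (e * m)) with hn2
  set q := Nat.log c (b ^ m) with hq
  set s' := Nat.clog c (b ^ ((e + 1) * m)) with hs'
  have hX : c ^ q ≤ b ^ m := Nat.pow_log_le_self c (by positivity)
  have hX2 : b ^ m < c ^ (q + 1) := Nat.lt_pow_succ_log_self (by omega) _
  have hn2c : c ^ n2 ≤ b ^ (e * m) := Nat.pow_log_le_self c (by positivity)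
  have hqn : e * q ≤ n2 := by
    refine Nat.le_log_of_pow_le (by omega) ?_
    rw [mul_comm e q, mul_comm e m, pow_mul, pow_mul]
    exact Nat.pow_le_pow_left hX e
  have hs'q : s' ≤ (e + 1) * (q + 1) := by
    refine Nat.clog_le_of_le_pow ?_
    rw [mul_comm (e+1) (q+1), mul_comm (e+1) m, pow_mul, pow_mul]
    exact Nat.pow_le_pow_left hX2.le _
  have hn2s' : n2 ≤ s' := by
    refine (Nat.log_le_clog c _).trans (Nat.clog_mono_right c ?_)
    exact Nat.pow_le_pow_right (by omega) (Nat.mul_le_mul_right m (by omega))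
  have hKn2 : K ≤ n2 := by
    refine Nat.le_log_of_pow_le (by omega) (hm.trans ?_)
    calc m ≤ 2 ^ m := Nat.lt_two_pow_self.le
      _ ≤ b ^ m := Nat.pow_le_pow_left hb m
      _ ≤ b ^ (e * m) := Nat.pow_le_pow_right (by omega) (Nat.le_mul_of_pos_left m he)
  have hn2K : 4 * ((e : ℝ) + 2) / δ + 2 * n0 + 2 * s + B + 8 ≤ n2 :=
    hK.trans (by exact_mod_cast hKn2)
  have hpos1 : 0 ≤ 4 * ((e : ℝ) + 2) / δ := by positivity
  have hn0p : (0:ℝ) ≤ n0 := by positivity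
  have hsp : (0:ℝ) ≤ s := by positivity
  have hBp : (0:ℝ) ≤ B := by positivity
  have hep : (1:ℝ) ≤ e := by exact_mod_cast he
  have hn2p : (0:ℝ) < n2 := by linarith
  have he2 : (e : ℝ) + 2 ≤ δ * n2 / 4 := by
    have : 4 * ((e : ℝ) + 2) / δ ≤ n2 := by linarith
    rw [div_le_iff₀ hδ] at this
    linarith
  set h := ⌈δ * n2 / 4⌉₊ with hh
  have hh1 : δ * n2 / 4 ≤ h := Nat.le_ceil _
  have hh2 : (h : ℝ) < δ * n2 / 4 + 1 := Nat.ceil_lt_add_one (by positivity)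
  have hδn : δ * n2 ≤ n2 := mul_le_of_le_one_left hn2p.le hδ1
  have hhn : h ≤ n2 := by
    have : (h : ℝ) ≤ n2 := by linarith
    exact_mod_cast this
  obtain ⟨n1, hn1⟩ := Nat.exists_eq_add_of_le hhn
  have hn1r : (n2 : ℝ) = h + n1 := by exact_mod_cast hn1
  have hn1h : (n2 : ℝ) / 2 ≤ n1 := by linarith
  have h01 : n0 ≤ n1 := by
    have : (n0 : ℝ) ≤ n1 := by linarith
    exact_mod_cast this
  have hs1 : s ≤ n1 := by
    have : (s : ℝ) ≤ n1 := by linarith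
    exact_mod_cast this
  have hn12 : n1 ≤ n2 := by omega
  refine ⟨?_, n1, hs1, by omega, ?_, ?_, ?_⟩
  · have : (B : ℝ) ≤ n2 := by linarith
    have : B ≤ n2 := by exact_mod_cast this
    omega
  · have r1 : (s' : ℝ) ≤ (e + 1) * (q + 1) := by exact_mod_cast hs'q
    have r2 : (e : ℝ) * q ≤ n2 := by exact_mod_cast hqn
    have r3 : (q : ℝ) ≤ n2 / e := by rw [le_div_iff₀ (by linarith)]; linarith
    have r4 : (s' : ℝ) - n1 ≤ n2 / e + δ * n2 / 2 := by
      have r6 : ((e : ℝ) + 1) * (q + 1) = e * q + q + e + 1 := by ring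
      rw [r6] at r1
      linarith only [r1, r2, r3, he2, hh2, hn1r]
    have r5 : (n2 : ℝ) / e ≤ 2 / e * n1 := by
      rw [div_mul_eq_mul_div]; gcongr; linarith only [hn1h]
    have r7 : δ * (n2 / 2) ≤ δ * n1 := by gcongr
    rw [add_mul]
    linarith only [r4, r5, r7]
  · intro d hd
    refine (hn0 n1 h01 d (Finset.mem_range.2 hd)).trans ?_
    gcongr
  · intro R hR
    have hdig : ∀ d < c, ∃ a, n1 + a < n2 ∧ rdigit c y (n1 + a) = d := by
      intro d hd
      refine exists_digit hn12 ?_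
      have a1 := abs_le.1 (hn0 n1 h01 d (Finset.mem_range.2 hd))
      have a2 := abs_le.1 (hn0 n2 (h01.trans hn12) d (Finset.mem_range.2 hd))
      have a3 : (n2 : ℝ) / c = h / c + n1 / c := by rw [hn1r]; ring
      have a4 : δ * n2 / 4 / c ≤ h / c := by gcongr
      have a5 : δ * n2 / 4 / c = 4 * (δ' * n2) := by rw [hδ']; field_simp; ring
      have a6 : δ' * n1 ≤ δ' * n2 := by gcongr
      have a7 : 0 < δ' * n2 := by positivity
      linarith [a1.1, a1.2, a2.1, a2.2]
    refine floor_agree hc (hdig 0 (by omega)) (hdig 1 (by omega)) (hR.trans_le ?_)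
    apply one_div_le_one_div_of_le (by positivity)
    exact_mod_cast hn2c

end SR

namespace SR

def GoodM (k : ℕ) (δ : ℝ) (M : ℕ) : Prop := ∀ p Q : ℕ, 1 ≤ Q → p + 1 ≤ Q →
    ∃ y ∈ Set.Ioo ((p : ℝ) / Q) ((p + 1) / Q), (∀ c ≥ 2, SimplyNormal c y) ∧
      ∀ c, 2 ≤ c → c ≤ k → ∀ d < c, ∀ n : ℕ,
        |N c d y (Nat.clog c Q + n) - N c d y (Nat.clog c Q) - n / c| ≤ δ * n + M

structure StepProp (k M B b e : ℕ) (δ : ℝ) (p Q p' Q' : ℕ) : Prop where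
  hQ : 1 ≤ Q'
  hp : p' + 1 ≤ Q'
  hB : B ≤ Q'
  hl : (p : ℝ) / Q < p' / Q'
  hr : ((p' : ℝ) + 1) / Q' < (p + 1) / Q
  hs : ∀ c, 2 ≤ c → c ≤ k + 1 → B ≤ Nat.clog c Q'
  hz : ∃ m ≥ B, ∀ R ∈ Set.Ioo ((p' : ℝ) / Q') ((p' + 1) / Q'), ∀ a < m, rdigit b R (e * m + a) = 0
  hn : ∀ R ∈ Set.Ioo ((p' : ℝ) / Q') ((p' + 1) / Q'), ∀ c, 2 ≤ c → c ≤ k → ∀ d < c,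
    (∀ n, Nat.clog c Q ≤ n → n ≤ Nat.clog c Q' →
      |(N c d R n - n / c) - (N c d R (Nat.clog c Q) - (Nat.clog c Q : ℕ) / c)|
        ≤ M + (2 / e + 2 * δ) * n) ∧
    |N c d R (Nat.clog c Q') - (Nat.clog c Q' : ℕ) / c| ≤ (2 / e + 2 * δ) * (Nat.clog c Q' : ℕ)

lemma step {k M : ℕ} {δ : ℝ} (hδ : 0 < δ) (hδ1 : δ ≤ 1) (hM : GoodM k δ M) (B : ℕ) {b e p Q : ℕ}
    (hb : 2 ≤ b) (he : 1 ≤ e) (hQ : 1 ≤ Q) (hp : p + 1 ≤ Q) :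
    ∃ p' Q', StepProp k M B b e δ p Q p' Q' := by
  obtain ⟨y, hy, hyN, hyM⟩ := hM p Q hQ hp
  have hQ0 : (0:ℝ) < Q := by exact_mod_cast hQ
  have hb0 : (0:ℝ) < b := by positivity
  have hb1 : (1:ℝ) ≤ b := by exact_mod_cast (by omega : 1 ≤ b)
  have hep : (0:ℝ) < e := by exact_mod_cast he
  have hev := (Filter.eventually_all_finset (Finset.Icc 2 (k+1))).2 (fun c hc =>
    per_base (Finset.mem_Icc.1 hc).1 (hyN c (Finset.mem_Icc.1 hc).1) hδ hδ1 hb he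
      (Nat.clog c Q) B)
  have hy0 : 0 < y := lt_of_le_of_lt (by positivity) hy.1
  set gap := min (y - p / Q) ((p + 1) / Q - y) with hgap
  have hgap0 : 0 < gap := lt_min (sub_pos.2 hy.1) (sub_pos.2 hy.2)
  obtain ⟨K, hK⟩ := exists_nat_gt (1 / gap)
  obtain ⟨m, hmall, hmB, hmK⟩ :=
    (hev.and ((eventually_ge_atTop B).and (eventually_ge_atTop K))).exists
  have hmb : m < b ^ m := Nat.lt_pow_self (by omega)
  set W : ℝ := (b : ℝ) ^ (e * m) with hW
  have hW0 : 0 < W := by positivity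
  have hmW : (m : ℝ) ≤ W := by
    have : m ≤ b ^ (e * m) := hmb.le.trans
      (Nat.pow_le_pow_right (by omega) (Nat.le_mul_of_pos_left m he))
    rw [hW]; exact_mod_cast this
  have hWgap : 1 / W < gap := by
    rw [div_lt_iff₀ hW0]
    rw [div_lt_iff₀ hgap0] at hK
    have : (K : ℝ) ≤ W := le_trans (by exact_mod_cast hmK) hmW
    nlinarith
  set F := ⌊y * W⌋₊ with hF
  have hF1 : (F : ℝ) ≤ y * W := Nat.floor_le (by positivity)
  have hF2 : y * W < F + 1 := Nat.lt_floor_add_one _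
  have hFy : (F : ℝ) / W ≤ y := by rwa [div_le_iff₀ hW0]
  have hFy2 : y < F / W + 1 / W := by rw [← add_div, lt_div_iff₀ hW0]; exact hF2
  set V : ℝ := (b : ℝ) ^ m with hV
  have hV0 : 0 < V := by positivity
  have hV1 : 1 ≤ V := one_le_pow₀ hb1
  have hQ' : ((b ^ ((e + 1) * m) : ℕ) : ℝ) = W * V := by
    push_cast; rw [hW, hV, add_mul, pow_add, one_mul]
  have hp' : ((F * b ^ m : ℕ) : ℝ) = F * V := by push_cast; rfl
  have hleft : ((F * b ^ m : ℕ) : ℝ) / (b ^ ((e + 1) * m) : ℕ) = F / W := by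
    rw [hQ', hp']; field_simp
  have hright : (((F * b ^ m : ℕ) : ℝ) + 1) / (b ^ ((e + 1) * m) : ℕ) = F / W + 1 / (W * V) := by
    rw [hQ', hp']; field_simp
  have hWV : 1 / (W * V) ≤ 1 / W := by
    apply one_div_le_one_div_of_le hW0; nlinarith
  have hg1 : gap ≤ y - p / Q := min_le_left _ _
  have hg2 : gap ≤ (p + 1) / Q - y := min_le_right _ _
  have hrr : (((F * b ^ m : ℕ) : ℝ) + 1) / (b ^ ((e + 1) * m) : ℕ) < (p + 1) / Q := by
    rw [hright]; linarith
  have hR : ∀ R ∈ Set.Ioo (((F * b ^ m : ℕ) : ℝ) / (b ^ ((e + 1) * m) : ℕ))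
      ((((F * b ^ m : ℕ) : ℝ) + 1) / (b ^ ((e + 1) * m) : ℕ)), |R - y| < 1 / W := by
    intro R hR
    rw [hleft, hright] at hR
    rw [abs_lt]; constructor <;> linarith [hR.1, hR.2]
  refine ⟨F * b ^ m, b ^ ((e + 1) * m), ⟨Nat.one_le_pow _ _ (by omega), ?_, ?_, ?_, hrr, ?_, ?_, ?_⟩⟩
  · have h1 : ((p : ℝ) + 1) / Q ≤ 1 := by rw [div_le_one hQ0]; exact_mod_cast hp
    have h2 := hrr.trans_le h1
    rw [div_lt_one (by rw [hQ']; positivity)] at h2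
    exact_mod_cast h2.le
  · refine hmB.trans (hmb.le.trans (Nat.pow_le_pow_right (by omega) ?_))
    exact Nat.le_mul_of_pos_left m (by omega)
  · rw [hleft]; linarith
  · intro c h2 hk
    exact (hmall c (Finset.mem_Icc.2 ⟨h2, hk⟩)).1
  · refine ⟨m, hmB, fun R hR a ha => ?_⟩
    rw [hleft, hright] at hR
    rw [rdigit_eq_iff (by omega)]
    have hfl : ⌊R * (b : ℝ) ^ (e * m + a + 1)⌋ = (F : ℤ) * (b : ℤ) ^ (a + 1) := by
      have e1 : R * (b : ℝ) ^ (e * m + a + 1) = R * W * (b : ℝ) ^ (a + 1) := by rw [hW]; ring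
      have h1 : (F : ℝ) < R * W := by
        have := hR.1; rwa [div_lt_iff₀ hW0] at this
      have h2 : R * W < F + 1 / V := by
        have := mul_lt_mul_of_pos_right hR.2 hW0
        have e2 : ((F : ℝ) / W + 1 / (W * V)) * W = F + 1 / V := by field_simp
        rwa [e2] at this
      have hba : (0:ℝ) < (b : ℝ) ^ (a+1) := by positivity
      have hbV : (b : ℝ) ^ (a + 1) ≤ V := pow_le_pow_right₀ hb1 (by omega)
      rw [Int.floor_eq_iff, e1]
      push_cast
      constructor
      · gcongr
      · calc R * W * (b : ℝ) ^ (a + 1) < (F + 1 / V) * (b : ℝ) ^ (a + 1) := by gcongr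
          _ = F * (b : ℝ) ^ (a + 1) + (b : ℝ) ^ (a + 1) / V := by ring
          _ ≤ F * (b : ℝ) ^ (a + 1) + 1 := by
            have : (b : ℝ) ^ (a + 1) / V ≤ 1 := by rwa [div_le_one hV0]
            linarith
    rw [hfl, pow_succ, ← mul_assoc, Int.mul_emod_left]
    simp
  · intro R hRm c h2 hk d hd
    obtain ⟨-, n1, hsn1, hn1s', hdiff, herr, hfl⟩ :=
      hmall c (Finset.mem_Icc.2 ⟨h2, by omega⟩)
    have hc0 : 0 < c := by omega
    have hfl' := hfl R (hR R hRm)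
    have hNe : ∀ j ≤ n1, N c d R j = N c d y j := fun j hj => N_congr hc0 d hfl' hj
    have hmid : ∀ n, Nat.clog c Q ≤ n → n ≤ n1 →
      |(N c d R n - n / c) - (N c d R (Nat.clog c Q) - (Nat.clog c Q : ℕ) / c)| ≤ M + δ * n := by
      intro n hn hn'
      rw [hNe n hn', hNe _ hsn1]
      obtain ⟨t, rfl⟩ := Nat.exists_eq_add_of_le hn
      have := hyM c h2 hk d hd t
      have e1 : (N c d y (Nat.clog c Q + t) - ((Nat.clog c Q + t : ℕ) : ℝ) / c) -
        (N c d y (Nat.clog c Q) - (Nat.clog c Q : ℕ) / c) =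
        N c d y (Nat.clog c Q + t) - N c d y (Nat.clog c Q) - t / c := by push_cast; ring
      rw [e1]
      refine this.trans ?_
      have : δ * t ≤ δ * ((Nat.clog c Q + t : ℕ) : ℝ) := by
        gcongr; omega
      linarith
    have h2e : (0:ℝ) ≤ 2 / e := by positivity
    constructor
    · intro n hn hn'
      have hnp : (0:ℝ) ≤ n := by positivity
      rcases le_total n n1 with h | h
      · refine (hmid n hn h).trans ?_
        have : δ * n ≤ (2 / e + 2 * δ) * n := by gcongr; linarith
        linarith
      · have a1 := abs_le.1 (hmid n1 hsn1 le_rfl)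
        have a2 := abs_le.1 (N_diff_le hc0 d R h)
        have a3 : (n : ℝ) ≤ (Nat.clog c (b ^ ((e + 1) * m)) : ℕ) := by exact_mod_cast hn'
        have a4 : (n1 : ℝ) ≤ n := by exact_mod_cast h
        have a5 : (2 / e + 2 * δ) * n1 ≤ (2 / e + 2 * δ) * n := by gcongr
        rw [abs_le]
        constructor <;> linarith [a1.1, a1.2, a2.1, a2.2]
    · have a1 := abs_le.1 (herr d hd)
      rw [← hNe n1 le_rfl] at a1
      have a2 := abs_le.1 (N_diff_le hc0 d R hn1s')
      have a4 : (n1 : ℝ) ≤ (Nat.clog c (b ^ ((e + 1) * m)) : ℕ) := by exact_mod_cast hn1s'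
      have a5 : (2 / e + 2 * δ) * n1 ≤ (2 / e + 2 * δ) * (Nat.clog c (b ^ ((e + 1) * m)) : ℕ) := by
        gcongr
      rw [abs_le]
      constructor <;> linarith [a1.1, a1.2, a2.1, a2.2]

end SR

namespace SR

noncomputable def dl (i : ℕ) : ℝ := 1 / ((i : ℝ) + 1)

lemma dl_pos (i : ℕ) : 0 < dl i := by unfold dl; positivity

lemma dl_le (i : ℕ) : dl i ≤ 1 := by
  unfold dl
  rw [div_le_one (by positivity)]
  have : (0:ℝ) ≤ i := by positivity
  linarith

noncomputable def MM (i : ℕ) : ℕ := (good_points i (dl_pos i)).choose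

lemma MM_spec (i : ℕ) : GoodM i (dl i) (MM i) := (good_points i (dl_pos i)).choose_spec

noncomputable def BB (i : ℕ) : ℕ := (i + 2) * MM (i + 1) + i + 1

def bs (x : ℕ) : ℕ := 2 + x.unpair.1

lemma stepEx (i x : ℕ) (s : ℕ × ℕ) : ∃ s' : ℕ × ℕ, 1 ≤ s.2 → s.1 + 1 ≤ s.2 →
    StepProp i (MM i) (BB i) (bs x) (x + 1) (dl i) s.1 s.2 s'.1 s'.2 := by
  by_cases h : 1 ≤ s.2 ∧ s.1 + 1 ≤ s.2
  · obtain ⟨p', Q', h'⟩ := step (dl_pos i) (dl_le i) (MM_spec i) (BB i)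
      (b := bs x) (e := x + 1) (by unfold bs; omega) (by omega) h.1 h.2
    exact ⟨(p', Q'), fun _ _ => h'⟩
  · exact ⟨s, fun h1 h2 => absurd ⟨h1, h2⟩ h⟩

noncomputable def stepF (i x : ℕ) (s : ℕ × ℕ) : ℕ × ℕ := (stepEx i x s).choose

noncomputable def st (f : ℕ → ℕ) : ℕ → ℕ × ℕ
  | 0 => (0, 1)
  | i + 1 => stepF i (f i) (st f i)

lemma st_continuous (i : ℕ) : Continuous (fun f : ℕ → ℕ => st f i) := by
  induction i with
  | zero => exact continuous_const
  | succ i ih =>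
    have h : Continuous (fun q : ℕ × (ℕ × ℕ) => stepF i q.1 q.2) := continuous_of_discreteTopology
    exact h.comp ((continuous_apply i).prodMk ih)

lemma st_ok (f : ℕ → ℕ) (i : ℕ) : 1 ≤ (st f i).2 ∧ (st f i).1 + 1 ≤ (st f i).2 := by
  induction i with
  | zero => simp [st]
  | succ i ih =>
    have := (stepEx i (f i) (st f i)).choose_spec ih.1 ih.2
    exact ⟨this.hQ, this.hp⟩

lemma st_step (f : ℕ → ℕ) (i : ℕ) :
    StepProp i (MM i) (BB i) (bs (f i)) (f i + 1) (dl i) (st f i).1 (st f i).2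
      (st f (i+1)).1 (st f (i+1)).2 :=
  (stepEx i (f i) (st f i)).choose_spec (st_ok f i).1 (st_ok f i).2

noncomputable def lo (f : ℕ → ℕ) (i : ℕ) : ℝ := ((st f i).1 : ℝ) / (st f i).2
noncomputable def hi (f : ℕ → ℕ) (i : ℕ) : ℝ := (((st f i).1 : ℝ) + 1) / (st f i).2

lemma lo_strictMono (f : ℕ → ℕ) : StrictMono (lo f) := strictMono_nat_of_lt_succ fun i => (st_step f i).hl
lemma hi_strictAnti (f : ℕ → ℕ) : StrictAnti (hi f) := strictAnti_nat_of_succ_lt fun i => (st_step f i).hr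

lemma st_pos (f : ℕ → ℕ) (i : ℕ) : (0:ℝ) < (st f i).2 := by exact_mod_cast (st_ok f i).1

lemma hi_sub_lo (f : ℕ → ℕ) (i : ℕ) : hi f i - lo f i = 1 / (st f i).2 := by
  unfold hi lo; ring

lemma lo_lt_hi (f : ℕ → ℕ) (i j : ℕ) : lo f i < hi f j := by
  have h1 : lo f (max i j) < hi f (max i j) := by
    have := hi_sub_lo f (max i j)
    have h2 : (0:ℝ) < 1 / (st f (max i j)).2 := one_div_pos.2 (st_pos f _)
    linarith
  have h2 := (lo_strictMono f).monotone (le_max_left i j)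
  have h3 := (hi_strictAnti f).antitone (le_max_right i j)
  linarith

noncomputable def Xi (f : ℕ → ℕ) : ℝ := ⨆ i, lo f i

lemma bdd (f : ℕ → ℕ) : BddAbove (Set.range (lo f)) :=
  ⟨hi f 0, by rintro _ ⟨i, rfl⟩; exact (lo_lt_hi f i 0).le⟩

lemma lo_le_Xi (f : ℕ → ℕ) (i : ℕ) : lo f i ≤ Xi f := le_ciSup (bdd f) i
lemma Xi_le_hi (f : ℕ → ℕ) (i : ℕ) : Xi f ≤ hi f i := ciSup_le fun j => (lo_lt_hi f j i).le

lemma Xi_mem (f : ℕ → ℕ) (i : ℕ) :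
    Xi f ∈ Set.Ioo (((st f i).1 : ℝ) / (st f i).2) ((((st f i).1 : ℝ) + 1) / (st f i).2) :=
  ⟨(lo_strictMono f (Nat.lt_succ_self i)).trans_le (lo_le_Xi f _),
    (Xi_le_hi f _).trans_lt (hi_strictAnti f (Nat.lt_succ_self i))⟩

lemma Q_ge (f : ℕ → ℕ) (i : ℕ) : i ≤ (st f i).2 := by
  cases i with
  | zero => omega
  | succ i =>
    have := (st_step f i).hB
    unfold BB at this
    have h : 0 ≤ (i + 2) * MM (i + 1) := Nat.zero_le _
    omega

lemma Xi_continuous : Continuous Xi := by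
  have hT : TendstoUniformly (fun (i : ℕ) (f : ℕ → ℕ) => lo f i) Xi atTop := by
    rw [Metric.tendstoUniformly_iff]
    intro ε hε
    obtain ⟨K, hK⟩ := exists_nat_gt (1 / ε)
    filter_upwards [eventually_ge_atTop K, eventually_ge_atTop 1] with i hi1 hi0 f
    have h1 := lo_le_Xi f i
    have h2 := Xi_le_hi f i
    have h3 := hi_sub_lo f i
    rw [Real.dist_eq, abs_of_nonneg (by linarith)]
    have h4 : (1:ℝ) / (st f i).2 < ε := by
      rw [div_lt_iff₀ (st_pos f i)]
      rw [div_lt_iff₀ hε] at hK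
      have : (K:ℝ) ≤ (st f i).2 := by exact_mod_cast hi1.trans (Q_ge f i)
      nlinarith
    linarith
  refine hT.continuous (Filter.Eventually.frequently (Filter.Eventually.of_forall fun i => ?_))
  have h : Continuous (fun s : ℕ × ℕ => (s.1 : ℝ) / s.2) := continuous_of_discreteTopology
  exact h.comp (st_continuous i)

lemma Xi_Icc (f : ℕ → ℕ) : Xi f ∈ Set.Icc (0 : ℝ) 1 := by
  have h1 := lo_le_Xi f 0
  have h2 := Xi_le_hi f 0
  simp [lo, hi, st] at h1 h2
  exact ⟨h1, h2⟩

lemma abnormal (f : ℕ → ℕ) {b x : ℕ} (hb : 2 ≤ b) (hx : bs x = b)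
    (hinf : {i : ℕ | f i = x}.Infinite) : ¬ NormalBase b (Xi f) := by
  intro hN
  have h1 := hN 1 le_rfl
  rw [pow_one, simplyNormal_iff] at h1
  set e := x + 1 with he
  have hη : (0:ℝ) < 1 / (4 * (2 * e + 1)) := by positivity
  obtain ⟨n0, hn0⟩ := eventually_atTop.1 (eventually_err hη (h1 0 (by omega)))
  obtain ⟨i, hi, hin⟩ := hinf.exists_gt n0
  have hfi : f i = x := hi
  obtain ⟨m, hm, hz⟩ := (st_step f i).hz
  have hz := hz _ (Xi_mem f (i+1))
  rw [hfi, hx] at hz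
  have hmi : i < m := by
    unfold BB at hm
    have h : 0 ≤ (i + 2) * MM (i + 1) := Nat.zero_le _
    omega
  have hNm : N b 0 (Xi f) (e * m + m) - N b 0 (Xi f) (e * m) = m := by
    unfold N
    rw [Finset.sum_range_add, add_sub_cancel_left]
    rw [Finset.sum_congr rfl (g := fun _ => (1:ℝ))]
    · simp
    · intro a ha
      have := hz a (Finset.mem_range.1 ha)
      simp only [ind]
      rw [if_pos this]
  have hem : m ≤ e * m := Nat.le_mul_of_pos_left m (by omega)
  have a1 := abs_le.1 (hn0 (e * m) (by omega))
  have a2 := abs_le.1 (hn0 (e * m + m) (by omega))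
  have hmp : (0:ℝ) < m := by exact_mod_cast (by omega : 0 < m)
  have hbr : (2:ℝ) ≤ b := by exact_mod_cast hb
  push_cast at a1 a2
  have e1 : 1 / (4 * (2 * (e:ℝ) + 1)) * (e * m) + 1 / (4 * (2 * (e:ℝ) + 1)) * (e * m + m) = m / 4 := by
    have : (0:ℝ) < 2 * e + 1 := by positivity
    field_simp; ring
  have e2 : ((e:ℝ) * m + m) / b = e * m / b + m / b := by ring
  have e3 : (m:ℝ) / b ≤ m / 2 := by gcongr
  linarith [a1.1, a1.2, a2.1, a2.2]

lemma normal (f : ℕ → ℕ) (hf : Tendsto f atTop atTop) {c : ℕ} (hc : 2 ≤ c) :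
    SimplyNormal c (Xi f) := by
  rw [simplyNormal_iff]
  intro d hd
  set R := Xi f with hR
  set s : ℕ → ℕ := fun i => Nat.clog c (st f i).2 with hs
  set θ : ℕ → ℝ := fun i => 2 / ((f i + 1 : ℕ) : ℝ) + 2 * dl i with hθ
  have hdl : Tendsto dl atTop (nhds 0) := tendsto_one_div_add_atTop_nhds_zero_nat
  have hθ0 : Tendsto θ atTop (nhds 0) := by
    have h1 : Tendsto (fun i => 2 / ((f i + 1 : ℕ) : ℝ)) atTop (nhds 0) := by
      apply Tendsto.const_div_atTop
      exact tendsto_natCast_atTop_atTop.comp (tendsto_atTop_mono (fun i => Nat.le_succ (f i)) hf)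
    have h2 := h1.add (hdl.const_mul 2)
    rw [mul_zero, add_zero] at h2
    exact h2
  have hsB : ∀ i, c ≤ i → BB i ≤ s (i + 1) := fun i hi => (st_step f i).hs c hc (by omega)
  have hmain : ∀ i, c ≤ i → ∀ n, s (i+1) ≤ n → n ≤ s (i + 2) →
      |N c d R n - n / c| ≤ (θ i + dl (i+1) + θ (i+1)) * n := by
    intro i hi n hn hn'
    have h1 := ((st_step f i).hn R (Xi_mem f (i+1)) c hc hi d hd).2
    have h2 := ((st_step f (i+1)).hn R (Xi_mem f (i+2)) c hc (by omega) d hd).1 n hn hn'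
    have h3 : (MM (i+1) : ℝ) ≤ dl (i+1) * n := by
      have b1 := hsB i hi
      unfold BB at b1
      have b2 : (i + 2) * MM (i+1) ≤ n := by omega
      have b3 : ((i : ℝ) + 2) * MM (i+1) ≤ n := by exact_mod_cast b2
      unfold dl
      push_cast
      rw [div_mul_eq_mul_div, le_div_iff₀ (by positivity)]
      linarith
    have h4 : θ i * s (i+1) ≤ θ i * n := by
      have : 0 ≤ θ i := by have := dl_pos i; positivity
      gcongr
    have h1' := abs_le.1 h1
    have h2' := abs_le.1 h2
    change -(θ i * s (i+1)) ≤ _ ∧ _ ≤ θ i * s (i+1) at h1'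
    change -(_ + θ (i+1) * n) ≤ _ ∧ _ ≤ _ + θ (i+1) * n at h2'
    rw [abs_le, add_mul, add_mul]
    constructor <;> linarith [h1'.1, h1'.2, h2'.1, h2'.2]
  rw [Metric.tendsto_nhds]
  intro ε hε
  have hε4 : 0 < ε / 4 := by positivity
  obtain ⟨i0, hi0⟩ := eventually_atTop.1
    ((hθ0.eventually (gt_mem_nhds hε4)).and (hdl.eventually (gt_mem_nhds hε4)))
  filter_upwards [eventually_ge_atTop (s (max i0 c + 1)), eventually_ge_atTop 1] with n hn hn1
  have hex : ∃ i, max i0 c ≤ i ∧ s (i+1) ≤ n ∧ n ≤ s (i+2) := by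
    by_contra hcon
    push Not at hcon
    have hall : ∀ i, max i0 c ≤ i → s (i + 1) ≤ n := by
      intro i hi
      induction i, hi using Nat.le_induction with
      | base => exact hn
      | succ i hi ih => exact (hcon i hi ih).le
    have h1 := hall (max i0 c + n) (by omega)
    have h2 := hsB (max i0 c + n) (by omega)
    unfold BB at h2
    have h : 0 ≤ (max i0 c + n + 2) * MM (max i0 c + n + 1) := Nat.zero_le _
    omega
  obtain ⟨i, hi, hi1, hi2⟩ := hex
  have hb := hmain i (by omega) n hi1 hi2
  have t1 := (hi0 i (by omega)).1
  have t2 := (hi0 (i+1) (by omega)).1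
  have t3 := (hi0 (i+1) (by omega)).2
  have hnp : (0:ℝ) < n := by exact_mod_cast hn1
  rw [Real.dist_eq]
  have e1 : N c d R n / n - 1 / c = (N c d R n - n / c) / n := by field_simp
  rw [e1, abs_div, abs_of_pos hnp, div_lt_iff₀ hnp]
  refine hb.trans_lt ?_
  gcongr
  linarith

end SR

/-- There is a continuous function `Ξ` from Baire space (sequences of positive
integers) to `[0,1] ⊆ ℝ` such that, for every `f` whose subsequence of first
occurrences enumerates the positive integers in increasing order: if no positive
integer occurs infinitely often in `f` then `Ξ f` is absolutely normal, and if all but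
finitely many positive integers occur infinitely often in `f` then `Ξ f` is absolutely
abnormal. -/
theorem second_reduction :
    ∃ Ξ : (ℕ → ℕ) → ℝ, Continuous Ξ ∧ (∀ f, Ξ f ∈ Set.Icc (0 : ℝ) 1) ∧
      ∀ f : ℕ → ℕ, (∀ i, 1 ≤ f i) →
        (∀ x : ℕ, 1 ≤ x → ∃ i, f i = x) →
        (∀ x : ℕ, 1 ≤ x → sInf {i | f i = x} < sInf {i | f i = x + 1}) →
        ((∀ x : ℕ, 1 ≤ x → {i : ℕ | f i = x}.Finite) → AbsolutelyNormal (Ξ f)) ∧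
        ((∃ N : ℕ, ∀ x : ℕ, N ≤ x → {i : ℕ | f i = x}.Infinite) →
          AbsolutelyAbnormal (Ξ f)) := by
  refine ⟨SR.Xi, SR.Xi_continuous, SR.Xi_Icc, fun f hf1 _ _ => ⟨fun hfin => ?_, ?_⟩⟩
  · have hT : Tendsto f atTop atTop := by
      rw [← Nat.cofinite_eq_atTop]
      refine Filter.Tendsto.cofinite_of_finite_preimage_singleton fun x => ?_
      rcases Nat.eq_zero_or_pos x with rfl | hx
      · have : f ⁻¹' {0} = ∅ := by
          ext i
          have := hf1 i
          simp only [Set.mem_preimage, Set.mem_singleton_iff, Set.mem_empty_iff_false, iff_false]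
          omega
        rw [this]
        exact Set.finite_empty
      · exact hfin x hx
    intro b hb l hl
    exact SR.normal f hT (hb.trans (Nat.le_self_pow (by omega) b))
  · rintro ⟨n, hn⟩ b hb
    refine SR.abnormal f (x := Nat.pair (b - 2) n) hb ?_ (hn _ (Nat.right_le_pair _ _))
    simp only [SR.bs, Nat.unpair_pair]
    omega
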